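/- Let Φ : ℂ₊ → Ω₊ be the conformal representation of the domain above a Lipschitz graph Γ with constant M = ‖a'‖_∞. Then Re Φ'(z) > 0 and |Im Φ'(z)| ≤ M Re Φ'(z) for all z ∈ ℂ₊; equivalently |arg Φ'(z)| ≤ arctan M < π/2. -/

import Mathlib

open Metric Set Filter Complex
open scoped ComplexConjugate

/-- A left inverse of an injective holomorphic function is holomorphic on the image, with
nonvanishing derivative. -/
theorem hasDerivAt_leftInvOn_of_injOn {U : Set ℂ} {f g : ℂ → ℂ} (hU : IsOpen U)
    (hf : DifferentiableOn ℂ f U) (hinj : InjOn f U) (hg : LeftInvOn g f U) {z : ℂ} (hz : z ∈ U) :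
    deriv f z ≠ 0 ∧ HasDerivAt g (deriv f z)⁻¹ (f z) := by
  have hfd : ∀ x ∈ U, DifferentiableAt ℂ f x := fun x hx =>
    hf.differentiableAt (hU.mem_nhds hx)
  have hfa : ∀ x ∈ U, AnalyticAt ℂ f x := fun x hx => hf.analyticAt (hU.mem_nhds hx)
  have hnonconst : ∀ x ∈ U, ¬ ∀ᶠ y in nhds x, f y = f x := by
    intro x hx h
    have h1 : ∀ᶠ y in nhdsWithin x {x}ᶜ, y = x := by
      filter_upwards [nhdsWithin_le_nhds h, nhdsWithin_le_nhds (hU.mem_nhds hx)] with y hy hyU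
      exact hinj hyU hx hy
    obtain ⟨y, hy, hne⟩ := (h1.and self_mem_nhdsWithin).exists
    exact hne hy
  have hopen : ∀ x ∈ U, nhds (f x) ≤ map f (nhds x) := fun x hx =>
    (hfa x hx).eventually_constant_or_nhds_le_map_nhds.resolve_left (hnonconst x hx)
  have himage : ∀ x ∈ U, ∀ V ∈ nhds x, f '' V ∈ nhds (f x) := fun x hx V hV =>
    hopen x hx (image_mem_map hV)
  have hcont : ∀ x ∈ U, ContinuousAt g (f x) := by
    intro x hx
    rw [ContinuousAt, hg hx]
    intro V hV
    rw [Filter.mem_map]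
    filter_upwards [himage x hx _ (inter_mem hV (hU.mem_nhds hx))]
    rintro _ ⟨y, ⟨hyV, hyU⟩, rfl⟩
    simpa [hg hyU] using hyV
  have hregular : ∀ x ∈ U, deriv f x ≠ 0 → HasDerivAt g (deriv f x)⁻¹ (f x) := by
    intro x hx hne
    refine HasDerivAt.of_local_left_inverse (f := f) (hcont x hx) ?_ hne ?_
    · rw [hg hx]
      exact (hfd x hx).hasDerivAt
    · filter_upwards [himage x hx _ (hU.mem_nhds hx)]
      rintro _ ⟨y, hyU, rfl⟩
      rw [hg hyU]
  have hne : ∀ᶠ y in nhdsWithin z {z}ᶜ, deriv f y ≠ 0 := by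
    refine (hfa z hz).deriv.eventually_eq_zero_or_eventually_ne_zero.resolve_left fun h => ?_
    obtain ⟨r, hr, hball⟩ := Metric.eventually_nhds_iff_ball.1 (h.and (hU.eventually_mem hz))
    refine hnonconst z hz ?_
    filter_upwards [ball_mem_nhds z hr] with y hy
    exact isOpen_ball.is_const_of_deriv_eq_zero (convex_ball z r).isPreconnected
      (hf.mono fun x hx => (hball x hx).2) (fun x hx => (hball x hx).1) hy (mem_ball_self hr)
  have hdiff : DifferentiableAt ℂ g (f z) := by
    refine (analyticAt_of_differentiable_on_punctured_nhds_of_continuousAt ?_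
      (hcont z hz)).differentiableAt
    rw [eventually_nhdsWithin_iff] at hne ⊢
    filter_upwards [himage z hz _ (hne.and (hU.eventually_mem hz))]
    rintro _ ⟨y, ⟨hy, hyU⟩, rfl⟩ hyz
    exact (hregular y hyU (hy fun h => hyz (congrArg f h))).differentiableAt
  have hchain : HasDerivAt (fun x => g (f x)) (deriv g (f z) * deriv f z) z :=
    hdiff.hasDerivAt.comp z (hfd z hz).hasDerivAt
  have hid : HasDerivAt (fun x => g (f x)) 1 z :=
    (hasDerivAt_id z).congr_of_eventuallyEq ((hU.eventually_mem hz).mono fun x hx => hg hx)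
  have hd : deriv f z ≠ 0 := right_ne_zero_of_mul_eq_one (hchain.unique hid)
  exact ⟨hd, hregular z hz hd⟩

theorem norm_sub_conj_sq_sub (v w : ℂ) :
    ‖w - conj v‖ ^ 2 - ‖w - v‖ ^ 2 = 4 * w.im * v.im := by
  simp only [Complex.sq_norm, Complex.normSq_apply, Complex.sub_re, Complex.sub_im,
    Complex.conj_re, Complex.conj_im]
  ring

theorem norm_sub_lt_norm_sub_conj {v w : ℂ} (hv : 0 < v.im) (hw : 0 < w.im) :
    ‖w - v‖ < ‖w - conj v‖ := by
  have := norm_sub_conj_sq_sub v w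
  have : 0 < w.im * v.im := mul_pos hw hv
  exact lt_of_pow_lt_pow_left₀ 2 (norm_nonneg _) (by linarith)

theorem sub_conj_ne_zero {v w : ℂ} (hv : 0 < v.im) (hw : 0 < w.im) : w - conj v ≠ 0 :=
  norm_pos_iff.1 ((norm_nonneg _).trans_lt (norm_sub_lt_norm_sub_conj hv hw))

/-- **Schwarz–Pick** for holomorphic maps from a disc to the upper half-plane. -/
theorem norm_sub_le_of_mapsTo_ball_upperHalfPlane {f : ℂ → ℂ} {c z : ℂ} {r : ℝ}
    (hd : DifferentiableOn ℂ f (ball c r)) (hmaps : ∀ x ∈ ball c r, 0 < (f x).im)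
    (hz : z ∈ ball c r) :
    ‖f z - f c‖ ≤ ‖z - c‖ / r * ‖f z - conj (f c)‖ := by
  have hr : 0 < r := pos_of_mem_ball hz
  have hc := hmaps c (mem_ball_self hr)
  have hnz : ∀ x ∈ ball c r, f x - conj (f c) ≠ 0 := fun x hx => sub_conj_ne_zero hc (hmaps x hx)
  have h := Complex.dist_le_div_mul_dist_of_mapsTo_ball (R₂ := 1)
    (f := fun x => (f x - f c) / (f x - conj (f c)))
    ((hd.sub_const _).div (hd.sub_const _) hnz) (fun x hx => by
      simpa using div_le_one_of_le₀ (norm_sub_lt_norm_sub_conj hc (hmaps x hx)).le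
        (norm_nonneg _)) hz
  have hp : 0 < ‖f z - conj (f c)‖ := norm_pos_iff.2 (hnz z hz)
  simp only [dist_eq_norm, sub_self, zero_div, sub_zero, norm_div] at h
  rw [div_le_iff₀ hp] at h
  exact h.trans_eq (by ring)

/-- **Schwarz–Pick** for holomorphic self-maps of the upper half-plane. -/
theorem norm_sub_mul_le_of_mapsTo_upperHalfPlane {F : ℂ → ℂ}
    (hd : DifferentiableOn ℂ F {z : ℂ | 0 < z.im}) (hmaps : ∀ x : ℂ, 0 < x.im → 0 < (F x).im)
    {v z : ℂ} (hv : 0 < v.im) (hz : 0 < z.im) :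
    ‖F z - F v‖ * ‖z - conj v‖ ≤ ‖z - v‖ * ‖F z - conj (F v)‖ := by
  set C : ℂ → ℂ := fun ξ => (v - ξ * conj v) / (1 - ξ) with hC
  have hne : ∀ ξ ∈ ball (0 : ℂ) 1, 1 - ξ ≠ 0 := by
    rintro ξ hξ h
    rw [← sub_eq_zero.1 h] at hξ
    simp at hξ
  have hCim : ∀ ξ ∈ ball (0 : ℂ) 1, 0 < (C ξ).im := by
    intro ξ hξ
    have h1 : (C ξ).im = v.im * (1 - ‖ξ‖ ^ 2) / normSq (1 - ξ) := by
      have := normSq_pos.2 (hne ξ hξ)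
      rw [hC, Complex.div_im, Complex.sq_norm]
      field_simp
      simp only [Complex.normSq_apply, Complex.sub_re, Complex.sub_im, Complex.mul_re,
        Complex.mul_im, Complex.conj_re, Complex.conj_im, Complex.one_re, Complex.one_im]
      ring
    have h2 : ‖ξ‖ < 1 := by simpa using hξ
    have h3 : ‖ξ‖ ^ 2 < 1 := by nlinarith [norm_nonneg ξ]
    rw [h1]
    exact div_pos (mul_pos hv (by linarith)) (normSq_pos.2 (hne ξ hξ))
  have hCd : DifferentiableOn ℂ C (ball 0 1) := by
    refine DifferentiableOn.div ?_ ?_ hne <;> fun_prop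
  have hzv := sub_conj_ne_zero hv hz
  have hpos : 0 < ‖z - conj v‖ := norm_pos_iff.2 hzv
  have hmem : (z - v) / (z - conj v) ∈ ball (0 : ℂ) 1 := by
    simpa [div_lt_one hpos] using norm_sub_lt_norm_sub_conj hv hz
  have hCz : C ((z - v) / (z - conj v)) = z := by
    have h1 := hne _ hmem
    rw [hC]
    simp only
    rw [div_eq_iff h1]
    field_simp
    ring
  have hC0 : C 0 = v := by simp [hC]
  have h := norm_sub_le_of_mapsTo_ball_upperHalfPlane (f := F ∘ C) (hd.comp hCd hCim)
    (fun x hx => hmaps _ (hCim x hx)) hmem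
  simp only [Function.comp_apply, hCz, hC0, sub_zero, norm_div, div_one] at h
  rw [div_mul_eq_mul_div, le_div_iff₀ hpos] at h
  exact h

/-- A half-plane form of the **Julia lemma**: a holomorphic self-map of the upper half-plane which
is asymptotic to the identity along a sequence tending to infinity does not decrease imaginary
parts. -/
theorem im_le_im_of_asymptotic_id {F : ℂ → ℂ}
    (hd : DifferentiableOn ℂ F {z : ℂ | 0 < z.im}) (hmaps : ∀ x : ℂ, 0 < x.im → 0 < (F x).im)
    {v : ℕ → ℂ} {δ : ℕ → ℝ} (hv : ∀ᶠ n in atTop, 0 < (v n).im)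
    (hvtop : Tendsto (fun n => ‖v n‖) atTop atTop) (hδ : Tendsto δ atTop (nhds 0))
    (hFv : ∀ᶠ n in atTop, ‖F (v n) - v n‖ ≤ δ n * (v n).im) {z : ℂ} (hz : 0 < z.im) :
    z.im ≤ (F z).im := by
  have hinv : Tendsto (fun n => ‖v n‖⁻¹) atTop (nhds 0) := tendsto_inv_atTop_zero.comp hvtop
  have hlower : Tendsto (fun n => 1 - δ n - ‖F z‖ * ‖v n‖⁻¹) atTop (nhds 1) := by
    simpa using (hδ.const_sub 1).sub (hinv.const_mul ‖F z‖)
  have hupper : Tendsto (fun n => ‖z‖ * ‖v n‖⁻¹ + 1) atTop (nhds 1) := by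
    simpa using (hinv.const_mul ‖z‖).add_const 1
  have hL : Tendsto (fun n => z.im * (1 - δ n - ‖F z‖ * ‖v n‖⁻¹) ^ 2) atTop (nhds z.im) := by
    simpa using (hlower.pow 2).const_mul z.im
  have hR : Tendsto (fun n => (F z).im * (1 + δ n) * (‖z‖ * ‖v n‖⁻¹ + 1) ^ 2) atTop
      (nhds (F z).im) := by
    simpa using ((hδ.const_add 1).const_mul (F z).im).mul (hupper.pow 2)
  refine le_of_tendsto_of_tendsto hL hR ?_
  filter_upwards [hv, hFv, hlower.eventually (lt_mem_nhds one_pos)] with n hn hFn hln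
  have hFz := hmaps z hz
  have hFvn := hmaps _ hn
  have hnorm : 0 < ‖v n‖ := norm_pos_iff.2 fun h => by simp [h] at hn
  have hδn : 0 ≤ δ n := nonneg_of_mul_nonneg_left ((norm_nonneg _).trans hFn) hn
  have hpick := norm_sub_mul_le_of_mapsTo_upperHalfPlane hd hmaps hn hz
  have hsq := pow_le_pow_left₀ (by positivity) hpick 2
  rw [mul_pow, mul_pow] at hsq
  have e1 := norm_sub_conj_sq_sub (v n) z
  have e2 := norm_sub_conj_sq_sub (F (v n)) (F z)
  have hcross : z.im * (v n).im * ‖F z - conj (F (v n))‖ ^ 2 ≤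
      (F z).im * (F (v n)).im * ‖z - conj (v n)‖ ^ 2 := by
    linear_combination (1 / 4) * hsq - (‖F z - conj (F (v n))‖ ^ 2 / 4) * e1 +
      (‖z - conj (v n)‖ ^ 2 / 4) * e2
  have him : (F (v n)).im ≤ (1 + δ n) * (v n).im := by
    have h := (Complex.abs_im_le_norm _).trans hFn
    rw [Complex.sub_im] at h
    linarith [le_abs_self ((F (v n)).im - (v n).im)]
  have hcross' : z.im * ‖F z - conj (F (v n))‖ ^ 2 ≤
      (F z).im * (1 + δ n) * ‖z - conj (v n)‖ ^ 2 := by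
    refine le_of_mul_le_mul_left ?_ hn
    have := mul_le_mul_of_nonneg_left him (mul_nonneg hFz.le (sq_nonneg ‖z - conj (v n)‖))
    linarith
  have hub : ‖z - conj (v n)‖ ≤ (‖z‖ * ‖v n‖⁻¹ + 1) * ‖v n‖ := by
    calc ‖z - conj (v n)‖ ≤ ‖z‖ + ‖v n‖ := by simpa using norm_sub_le z (conj (v n))
      _ = _ := by field_simp
  have hlb : (1 - δ n - ‖F z‖ * ‖v n‖⁻¹) * ‖v n‖ ≤ ‖F z - conj (F (v n))‖ := by
    have h1 : ‖F (v n)‖ - ‖F z‖ ≤ ‖F z - conj (F (v n))‖ := by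
      simpa [norm_sub_rev] using norm_sub_norm_le (conj (F (v n))) (F z)
    have h2 : ‖v n‖ - ‖F (v n)‖ ≤ ‖F (v n) - v n‖ := by
      simpa [norm_sub_rev] using norm_sub_norm_le (v n) (F (v n))
    have h3 : (v n).im ≤ ‖v n‖ := (le_abs_self _).trans (Complex.abs_im_le_norm _)
    have h4 := mul_le_mul_of_nonneg_left h3 hδn
    calc _ = ‖v n‖ - δ n * ‖v n‖ - ‖F z‖ := by field_simp
      _ ≤ _ := by linarith
  have hlb2 := pow_le_pow_left₀ (by positivity) hlb 2
  have hub2 := pow_le_pow_left₀ (norm_nonneg _) hub 2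
  rw [mul_pow] at hlb2 hub2
  refine le_of_mul_le_mul_right ?_ (pow_pos hnorm 2)
  have h5 := mul_le_mul_of_nonneg_left hlb2 hz.le
  have h6 := mul_le_mul_of_nonneg_left hub2 (show 0 ≤ (F z).im * (1 + δ n) by positivity)
  linarith

theorem abs_arg_le_arctan {w : ℂ} {M : ℝ} (hre : 0 < w.re) (h : |w.im| ≤ M * w.re) :
    |Complex.arg w| ≤ Real.arctan M := by
  have harg : |Complex.arg w| < Real.pi / 2 := Complex.abs_arg_lt_pi_div_two_iff.2 (Or.inl hre)
  rw [abs_lt] at harg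
  have htan : Complex.arg w = Real.arctan (w.im / w.re) := by
    rw [← Complex.tan_arg, Real.arctan_tan harg.1 harg.2]
  have hdiv : |w.im / w.re| ≤ M := by
    rwa [abs_div, abs_of_pos hre, div_le_iff₀ hre]
  rw [abs_le] at hdiv
  rw [htan, abs_le, ← Real.arctan_neg]
  exact ⟨Real.arctan_mono hdiv.1, Real.arctan_mono hdiv.2⟩

theorem apply_le_add_mul_abs {a : ℝ → ℝ} {M : ℝ} (hM : 0 ≤ M)
    (ha : LipschitzWith (Real.toNNReal M) a) (x y : ℝ) : a x ≤ a y + M * |x - y| := by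
  have h := ha.dist_le_mul x y
  rw [Real.dist_eq, Real.dist_eq, Real.coe_toNNReal M hM] at h
  linarith [le_abs_self (a x - a y)]

/-- If `Φ` maps the upper half-plane conformally onto the domain above a Lipschitz graph and `ζ`
points into the vertical cone of that graph, then `Im (ζ / Φ') ≥ 0`. -/
theorem im_div_deriv_nonneg {a : ℝ → ℝ} {M : ℝ} (hM : 0 ≤ M)
    (ha : LipschitzWith (Real.toNNReal M) a) {Φ : ℂ → ℂ}
    (hd : DifferentiableOn ℂ Φ {z : ℂ | 0 < z.im}) (hinj : InjOn Φ {z : ℂ | 0 < z.im})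
    (honto : Φ '' {z : ℂ | 0 < z.im} = {w : ℂ | a w.re < w.im})
    (hc : ContinuousOn Φ {z : ℂ | 0 ≤ z.im}) {ζ : ℂ} (hζ : M * |ζ.re| ≤ ζ.im)
    {z : ℂ} (hz : 0 < z.im) :
    0 ≤ (ζ * (deriv Φ z)⁻¹).im := by
  have hUo : IsOpen {z : ℂ | 0 < z.im} := isOpen_lt continuous_const Complex.continuous_im
  set Ψ : ℂ → ℂ := Function.invFunOn Φ {z : ℂ | 0 < z.im}
  have hleft : LeftInvOn Ψ Φ {z : ℂ | 0 < z.im} := hinj.leftInvOn_invFunOn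
  have hmem : ∀ w : ℂ, a w.re < w.im → 0 < (Ψ w).im ∧ Φ (Ψ w) = w := by
    intro w hw
    have hw' : w ∈ Φ '' {z : ℂ | 0 < z.im} := honto ▸ hw
    exact ⟨Function.invFunOn_mem hw', Function.invFunOn_eq hw'⟩
  have hΦmem : ∀ x : ℂ, 0 < x.im → a (Φ x).re < (Φ x).im := fun x hx => by
    have : Φ x ∈ Φ '' {z : ℂ | 0 < z.im} := mem_image_of_mem Φ hx
    rwa [honto] at this
  have hderiv : ∀ x : ℂ, 0 < x.im → HasDerivAt Ψ (deriv Φ x)⁻¹ (Φ x) := fun x hx =>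
    (hasDerivAt_leftInvOn_of_injOn hUo hd hinj hleft hx).2
  have hΨd : ∀ w : ℂ, a w.re < w.im → DifferentiableAt ℂ Ψ w := by
    intro w hw
    obtain ⟨h1, h2⟩ := hmem w hw
    simpa only [h2] using (hderiv _ h1).differentiableAt
  have hshift : ∀ t : ℝ, 0 ≤ t → ∀ w : ℂ, a w.re < w.im →
      a (w + t * ζ).re < (w + t * ζ).im := by
    intro t ht w hw
    have h1 := apply_le_add_mul_abs hM ha (w + t * ζ).re w.re
    have h2 := mul_le_mul_of_nonneg_left hζ ht
    simp only [Complex.add_re, Complex.add_im, Complex.re_ofReal_mul, Complex.im_ofReal_mul,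
      add_sub_cancel_left, abs_mul, abs_of_nonneg ht] at h1 ⊢
    linarith
  -- points going up to infinity, together with discs of growing radius in the domain
  set p : ℕ → ℂ := fun n => ⟨0, a 0 + (1 + M) * n⟩ with hp
  have hball : ∀ n : ℕ, ∀ x ∈ ball (p n) (n : ℝ), a x.re < x.im := by
    intro n x hx
    rw [mem_ball, dist_eq_norm] at hx
    have h1 := (Complex.abs_re_le_norm _).trans_lt hx
    have h2 := (Complex.abs_im_le_norm _).trans_lt hx
    simp only [hp, Complex.sub_re, Complex.sub_im] at h1 h2
    have h3 := apply_le_add_mul_abs hM ha x.re 0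
    have h4 := mul_le_mul_of_nonneg_left h1.le hM
    linarith [(abs_lt.1 h2).1]
  have hpmem : ∀ᶠ n : ℕ in atTop, a (p n).re < (p n).im := by
    filter_upwards [eventually_gt_atTop 0] with n hn
    exact hball n _ (mem_ball_self (by exact_mod_cast hn))
  have hptop : Tendsto (fun n => (p n).im) atTop atTop :=
    tendsto_atTop_add_const_left _ _
      (tendsto_natCast_atTop_atTop.const_mul_atTop (by linarith : 0 < 1 + M))
  have hvtop : Tendsto (fun n => ‖Ψ (p n)‖) atTop atTop := by
    rw [Filter.tendsto_atTop]
    intro R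
    have hcomp : IsCompact (closedBall (0 : ℂ) R ∩ {z : ℂ | 0 ≤ z.im}) :=
      (isCompact_closedBall 0 R).inter_right (isClosed_le continuous_const Complex.continuous_im)
    obtain ⟨B, hB⟩ := hcomp.exists_bound_of_continuousOn (hc.mono inter_subset_right)
    filter_upwards [hpmem, hptop.eventually_gt_atTop B] with n hn hnB
    obtain ⟨h1, h2⟩ := hmem _ hn
    by_contra! hlt
    have h3 := hB (Ψ (p n)) ⟨by simpa using hlt.le, h1.le⟩
    rw [h2] at h3
    linarith [(le_abs_self _).trans (Complex.abs_im_le_norm (p n))]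
  have hmono : ∀ t : ℝ, 0 ≤ t → z.im ≤ (Ψ (Φ z + t * ζ)).im := by
    intro t ht
    have hδ : Tendsto (fun n : ℕ => 4 * (‖t * ζ‖ / n)) atTop (nhds 0) := by
      simpa using (tendsto_const_div_atTop_nhds_zero_nat ‖t * ζ‖).const_mul 4
    refine im_le_im_of_asymptotic_id (F := fun x => Ψ (Φ x + t * ζ)) (v := fun n => Ψ (p n))
      (fun x hx => ?_) (fun x hx => (hmem _ (hshift t ht _ (hΦmem x hx))).1)
      (hpmem.mono fun n hn => (hmem _ hn).1) hvtop hδ ?_ hz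
    · exact ((hΨd _ (hshift t ht _ (hΦmem x hx))).comp x
        ((hd.differentiableAt (hUo.mem_nhds hx)).add_const _)).differentiableWithinAt
    · filter_upwards [hpmem, eventually_gt_atTop 0,
        tendsto_natCast_atTop_atTop.eventually_ge_atTop (2 * ‖t * ζ‖ + 1)] with n hn hn0 hnt
      have hn0' : (0 : ℝ) < n := by exact_mod_cast hn0
      obtain ⟨h1, h2⟩ := hmem _ hn
      have hin : p n + t * ζ ∈ ball (p n) (n : ℝ) := by
        rw [mem_ball, dist_eq_norm, add_sub_cancel_left]
        linarith [norm_nonneg (t * ζ)]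
      have h3 := norm_sub_le_of_mapsTo_ball_upperHalfPlane
        (fun x hx => (hΨd x (hball n x hx)).differentiableWithinAt)
        (fun x hx => (hmem x (hball n x hx)).1) hin
      simp only [h2]
      rw [add_sub_cancel_left] at h3
      set q := Ψ (p n)
      set q' := Ψ (p n + t * ζ)
      have h4 : ‖q' - conj q‖ ≤ ‖q' - q‖ + 2 * q.im := by
        calc ‖q' - conj q‖ = ‖(q' - q) + (q - conj q)‖ := by ring_nf
          _ ≤ ‖q' - q‖ + ‖q - conj q‖ := norm_add_le _ _
          _ = ‖q' - q‖ + 2 * q.im := by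
            rw [Complex.sub_conj]
            simp [abs_of_pos h1]
      have h5 : ‖t * ζ‖ / n ≤ 1 / 2 := by
        rw [div_le_iff₀ hn0']
        linarith
      have h6 : 0 ≤ ‖t * ζ‖ / n := by positivity
      have h7 := mul_le_mul_of_nonneg_left h4 h6
      have h8 := mul_le_mul_of_nonneg_right h5 (norm_nonneg (q' - q))
      linarith
  have hcurve : HasDerivAt (fun t : ℝ => Ψ (Φ z + t * ζ)) (ζ * (deriv Φ z)⁻¹) 0 := by
    have h1 : HasDerivAt (fun t : ℝ => Φ z + t * ζ) ζ 0 := by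
      simpa using ((Complex.ofRealCLM.hasDerivAt (x := (0 : ℝ))).mul_const ζ).const_add (Φ z)
    have h2 : HasDerivAt Ψ (deriv Φ z)⁻¹ (Φ z + (0 : ℝ) * ζ) := by simpa using hderiv z hz
    rw [mul_comm]
    exact h2.comp (0 : ℝ) h1
  have him : HasDerivAt (fun t : ℝ => (Ψ (Φ z + t * ζ)).im) (ζ * (deriv Φ z)⁻¹).im 0 :=
    Complex.imCLM.hasFDerivAt.comp_hasDerivAt (0 : ℝ) hcurve
  refine ge_of_tendsto him.tendsto_slope_zero_right ?_
  filter_upwards [self_mem_nhdsWithin] with t ht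
  have ht' : 0 < t := ht
  have h := hmono t ht'.le
  simp only [zero_add, Complex.ofReal_zero, zero_mul, add_zero, smul_eq_mul, hleft hz]
  exact mul_nonneg (inv_nonneg.2 ht'.le) (sub_nonneg.2 h)

/-- For the conformal map `Φ` of the upper half-plane onto the domain above a
Lipschitz graph with constant `M`, one has `Re Φ'(z) > 0` and
`|Im Φ'(z)| ≤ M · Re Φ'(z)` for all `z` in the upper half-plane; equivalently
`|arg Φ'(z)| ≤ arctan M < π/2`. -/
theorem conformal_deriv_sector
    (a : ℝ → ℝ) (M : ℝ) (hM : 0 ≤ M) (ha : LipschitzWith (Real.toNNReal M) a)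
    (Γ : Set ℂ) (hΓ : Γ = {w : ℂ | w.im = a w.re})
    (Ω : Set ℂ) (hΩ : Ω = {w : ℂ | a w.re < w.im})
    (Φ : ℂ → ℂ)
    (hΦd : DifferentiableOn ℂ Φ {z : ℂ | 0 < z.im})
    (hΦinj : Set.InjOn Φ {z : ℂ | 0 < z.im})
    (hΦonto : Φ '' {z : ℂ | 0 < z.im} = Ω)
    (hΦc : ContinuousOn Φ {z : ℂ | 0 ≤ z.im})
    (hΦbd : Φ '' {z : ℂ | z.im = 0} = Γ)
    (hPhiInf : Tendsto Φ (Filter.cocompact ℂ ⊓ Filter.principal {z : ℂ | 0 < z.im})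
      (Filter.cocompact ℂ)) :
    ∀ z : ℂ, 0 < z.im →
      0 < (deriv Φ z).re ∧ |(deriv Φ z).im| ≤ M * (deriv Φ z).re ∧
      |Complex.arg (deriv Φ z)| ≤ Real.arctan M ∧ Real.arctan M < Real.pi / 2 := by
  intro z hz
  subst hΩ
  have hne : deriv Φ z ≠ 0 :=
    (hasDerivAt_leftInvOn_of_injOn (isOpen_lt continuous_const Complex.continuous_im) hΦd hΦinj
      hΦinj.leftInvOn_invFunOn hz).1
  have hcone : ∀ ζ : ℂ, M * |ζ.re| ≤ ζ.im →
      0 ≤ ζ.im * (deriv Φ z).re - ζ.re * (deriv Φ z).im := by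
    intro ζ hζ
    have h := im_div_deriv_nonneg hM ha hΦd hΦinj hΦonto hΦc hζ hz
    have hpos := normSq_pos.2 hne
    rw [← div_eq_mul_inv, Complex.div_im, ← sub_div] at h
    exact (div_nonneg_iff.1 h).elim And.left fun h' => absurd h'.2 hpos.not_ge
  have hvert := hcone ⟨0, 1⟩ (by simp)
  have hright := hcone ⟨1, M⟩ (by simp)
  have hleft := hcone ⟨-1, M⟩ (by simp)
  simp only [one_mul, zero_mul, sub_zero, neg_one_mul, sub_neg_eq_add] at hvert hright hleft
  have hsector : |(deriv Φ z).im| ≤ M * (deriv Φ z).re := abs_le.2 ⟨by linarith, by linarith⟩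
  have hre : 0 < (deriv Φ z).re := by
    refine hvert.lt_of_ne fun h => hne (Complex.ext h.symm ?_)
    rw [← h, mul_zero] at hsector
    exact abs_nonpos_iff.1 hsector
  exact ⟨hre, hsector, abs_arg_le_arctan hre hsector, Real.arctan_lt_pi_div_two M⟩
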